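/- arXiv:2510.00983 — 2 statements merged into one kernel-verified Lean document; each statement's English description precedes it below -/
import Mathlib

section
/- Let x₀, x₁ ∈ ℝ^{n+1} be unit vectors with ⟨x₀, x₁⟩ ∈ (−1, 1), and let κ: ℝ → (0, 1] be differentiable. Define the geodesic interpolation x_t := exp_{x₁}(κ(t)·log_{x₁}(x₀)). Then for every t with κ(t) < 1, x_t is a unit vector with ⟨x_t, x₁⟩ ∈ (−1,1), the curve t ↦ x_t is differentiable, and its velocity satisfies (d/dt)x_t = −(κ'(t)/κ(t))·log_{x_t}(x₁); in particular ‖(d/dt)x_t‖ = |κ'(t)|·arccos⟨x₀, x₁⟩. -/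
open scoped RealInnerProductSpace

/-- The spherical exponential map `exp_x(u) = x·cos‖u‖ + (u/‖u‖)·sin‖u‖`. -/
noncomputable def sphereExp {n : ℕ} (x u : EuclideanSpace ℝ (Fin (n + 1))) :
    EuclideanSpace ℝ (Fin (n + 1)) :=
  Real.cos ‖u‖ • x + (Real.sin ‖u‖ / ‖u‖) • u

/-- The spherical logarithm map `log_x(y) = (arccos c/√(1−c²))·(y − c·x)`, `c = ⟨x,y⟩`. -/
noncomputable def sphereLog {n : ℕ} (x y : EuclideanSpace ℝ (Fin (n + 1))) :
    EuclideanSpace ℝ (Fin (n + 1)) :=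
  (Real.arccos ⟪x, y⟫ / Real.sqrt (1 - ⟪x, y⟫ ^ 2)) • (y - ⟪x, y⟫ • x)

/-!
For a tangent vector `u` at a unit vector `x`, the curve `r ↦ exp_x (r • u)` is the great circle
`cos (r‖u‖) • x + (sin (r‖u‖) / ‖u‖) • u`, as cosine is even and sine is odd. The logarithm that
points back from `exp_x u` to `x` is `(‖u‖ sin ‖u‖) • x - cos ‖u‖ • u`, which is minus the velocity
of this great circle at `r = 1`. Hence at any `r ≠ 0` with `‖r • u‖ < π` the velocity is `-1/r`
times the logarithm pointing back to `x`. The theorem is the chain rule applied with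
`u = log_{x₁} x₀`, a tangent vector of length `arccos ⟪x₀, x₁⟫`.
-/

section InnerProductSpace

variable {E : Type*} [NormedAddCommGroup E] [InnerProductSpace ℝ E] {x : E}

theorem inner_sub_inner_smul_self_eq_zero (hx : ‖x‖ = 1) (y : E) :
    ⟪x, y - ⟪x, y⟫ • x⟫ = 0 := by
  simp [inner_sub_right, inner_smul_right, hx]

theorem norm_sub_inner_smul_self_sq (hx : ‖x‖ = 1) (y : E) :
    ‖y - ⟪x, y⟫ • x‖ ^ 2 = ‖y‖ ^ 2 - ⟪x, y⟫ ^ 2 := by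
  rw [norm_sub_sq_real, inner_smul_right, real_inner_comm x y, norm_smul, hx, mul_one,
    Real.norm_eq_abs, sq_abs]
  ring

end InnerProductSpace

theorem abs_mul_sin_abs_mul (r a : ℝ) : |r| * Real.sin (|r| * a) = r * Real.sin (r * a) := by
  rcases abs_choice r with h | h <;> simp [h]

theorem cos_abs_mul (r a : ℝ) : Real.cos (|r| * a) = Real.cos (r * a) := by
  rcases abs_choice r with h | h <;> simp [h]

theorem cos_mem_Ioo_of_mem_Ioo {a : ℝ} (ha : a ∈ Set.Ioo 0 Real.pi) :
    Real.cos a ∈ Set.Ioo (-1) 1 := by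
  constructor
  · simpa using Real.cos_lt_cos_of_nonneg_of_le_pi ha.1.le le_rfl ha.2
  · simpa using Real.cos_lt_cos_of_nonneg_of_le_pi le_rfl ha.2.le ha.1

section Sphere

variable {n : ℕ} {x y u : EuclideanSpace ℝ (Fin (n + 1))}

theorem inner_sphereExp_self (hx : ‖x‖ = 1) (hu : ⟪x, u⟫ = 0) :
    ⟪sphereExp x u, x⟫ = Real.cos ‖u‖ := by
  simp [sphereExp, inner_add_left, inner_smul_left, real_inner_comm, hu, hx]

theorem norm_sphereExp (hx : ‖x‖ = 1) (hu : ⟪x, u⟫ = 0) : ‖sphereExp x u‖ = 1 := by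
  rcases eq_or_ne u 0 with rfl | hu0
  · simp [sphereExp, hx]
  have horth : ⟪Real.cos ‖u‖ • x, (Real.sin ‖u‖ / ‖u‖) • u⟫ = 0 := by
    simp [inner_smul_left, inner_smul_right, hu]
  have hsin : ‖(Real.sin ‖u‖ / ‖u‖) • u‖ = |Real.sin ‖u‖| := by
    rw [norm_smul, norm_div, norm_norm, div_mul_cancel₀ _ (norm_ne_zero_iff.2 hu0),
      Real.norm_eq_abs]
  rw [← sq_eq_sq₀ (norm_nonneg _) zero_le_one, sphereExp, norm_add_sq_real, horth, hsin,
    norm_smul, hx, mul_one, Real.norm_eq_abs, sq_abs, sq_abs, mul_zero, add_zero, one_pow,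
    Real.cos_sq_add_sin_sq]

theorem sphereExp_smul (x u : EuclideanSpace ℝ (Fin (n + 1))) (r : ℝ) :
    sphereExp x (r • u)
      = Real.cos (r * ‖u‖) • x + (Real.sin (r * ‖u‖) / ‖u‖) • u := by
  have hsin : Real.sin (|r| * ‖u‖) / (|r| * ‖u‖) * r = Real.sin (r * ‖u‖) / ‖u‖ := by
    rcases eq_or_ne r 0 with rfl | hr
    · simp
    calc Real.sin (|r| * ‖u‖) / (|r| * ‖u‖) * r
        = |r| * Real.sin (|r| * ‖u‖) * r / (|r| ^ 2 * ‖u‖) := by field_simp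
      _ = Real.sin (r * ‖u‖) / ‖u‖ := by
        rw [abs_mul_sin_abs_mul, sq_abs]
        field_simp
  rw [sphereExp, norm_smul, Real.norm_eq_abs, cos_abs_mul, smul_smul, hsin]

theorem hasDerivAt_sphereExp_smul {κ : ℝ → ℝ} {κ' t : ℝ} (hκ : HasDerivAt κ κ' t)
    (x u : EuclideanSpace ℝ (Fin (n + 1))) :
    HasDerivAt (fun s => sphereExp x (κ s • u))
      (κ' • (Real.cos (κ t * ‖u‖) • u - (‖u‖ * Real.sin (κ t * ‖u‖)) • x)) t := by
  rcases eq_or_ne u 0 with rfl | hu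
  · simpa using hasDerivAt_const t (sphereExp x 0)
  have hu' : ‖u‖ ≠ 0 := norm_ne_zero_iff.2 hu
  have hangle : HasDerivAt (fun s => κ s * ‖u‖) (κ' * ‖u‖) t := hκ.mul_const ‖u‖
  simp only [sphereExp_smul]
  refine ((hangle.cos.smul_const x).add ((hangle.sin.div_const ‖u‖).smul_const u)).congr_deriv ?_
  match_scalars <;> field_simp

theorem inner_sphereLog (hx : ‖x‖ = 1) (y : EuclideanSpace ℝ (Fin (n + 1))) :
    ⟪x, sphereLog x y⟫ = 0 := by
  rw [sphereLog, inner_smul_right, inner_sub_inner_smul_self_eq_zero hx, mul_zero]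

theorem norm_sphereLog (hx : ‖x‖ = 1) (hy : ‖y‖ = 1) (hxy : ⟪x, y⟫ ∈ Set.Ioo (-1) 1) :
    ‖sphereLog x y‖ = Real.arccos ⟪x, y⟫ := by
  have hsqrt : √(1 - ⟪x, y⟫ ^ 2) = ‖y - ⟪x, y⟫ • x‖ := by
    rw [← Real.sqrt_sq (norm_nonneg (y - ⟪x, y⟫ • x)), norm_sub_inner_smul_self_sq hx, hy, one_pow]
  have hpos : 0 < √(1 - ⟪x, y⟫ ^ 2) := Real.sqrt_pos.2 (by nlinarith [hxy.1, hxy.2])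
  rw [sphereLog, norm_smul, ← hsqrt,
    Real.norm_of_nonneg (div_nonneg (Real.arccos_nonneg _) hpos.le), div_mul_cancel₀ _ hpos.ne']

theorem sphereLog_sphereExp_self (hx : ‖x‖ = 1) (hu : ⟪x, u⟫ = 0) (huπ : ‖u‖ < Real.pi) :
    sphereLog (sphereExp x u) x = (‖u‖ * Real.sin ‖u‖) • x - Real.cos ‖u‖ • u := by
  rcases eq_or_ne u 0 with rfl | hu0
  · simp [sphereLog, sphereExp, hx]
  have hu0' : 0 < ‖u‖ := norm_pos_iff.2 hu0
  have hsin : 0 < Real.sin ‖u‖ := Real.sin_pos_of_pos_of_lt_pi hu0' huπ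
  have hreject : x - Real.cos ‖u‖ • sphereExp x u
      = Real.sin ‖u‖ • (Real.sin ‖u‖ • x - (Real.cos ‖u‖ / ‖u‖) • u) := by
    rw [sphereExp]
    match_scalars
    · linear_combination -Real.sin_sq_add_cos_sq ‖u‖
    · ring
  rw [sphereLog, inner_sphereExp_self hx hu, Real.arccos_cos hu0'.le huπ.le, ← Real.sin_sq,
    Real.sqrt_sq hsin.le, hreject]
  match_scalars <;> field_simp

theorem hasDerivAt_sphereExp_smul_eq_sphereLog {κ : ℝ → ℝ} {κ' t : ℝ}
    (hκ : HasDerivAt κ κ' t) (hκ0 : κ t ≠ 0) (hx : ‖x‖ = 1) (hu : ⟪x, u⟫ = 0)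
    (hπ : ‖κ t • u‖ < Real.pi) :
    HasDerivAt (fun s => sphereExp x (κ s • u))
      ((-(κ' / κ t)) • sphereLog (sphereExp x (κ t • u)) x) t := by
  have hκu : ⟪x, κ t • u⟫ = 0 := by rw [inner_smul_right, hu, mul_zero]
  refine (hasDerivAt_sphereExp_smul hκ x u).congr_deriv ?_
  rw [sphereLog_sphereExp_self hx hκu hπ, norm_smul, Real.norm_eq_abs, mul_right_comm,
    abs_mul_sin_abs_mul, cos_abs_mul]
  match_scalars <;> field_simp

theorem sphere_geodesic_interpolation_velocity_general
    (x₀ x₁ : EuclideanSpace ℝ (Fin (n + 1)))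
    (h₀ : ‖x₀‖ = 1) (h₁ : ‖x₁‖ = 1) (hc : ⟪x₀, x₁⟫ ∈ Set.Ioo (-1 : ℝ) 1)
    {κ : ℝ → ℝ} {κ' t : ℝ} (hκ : HasDerivAt κ κ' t) (hκ0 : κ t ≠ 0)
    (hπ : |κ t| * Real.arccos ⟪x₀, x₁⟫ < Real.pi) :
    ‖sphereExp x₁ (κ t • sphereLog x₁ x₀)‖ = 1
    ∧ ⟪sphereExp x₁ (κ t • sphereLog x₁ x₀), x₁⟫ ∈ Set.Ioo (-1 : ℝ) 1
    ∧ HasDerivAt (fun s => sphereExp x₁ (κ s • sphereLog x₁ x₀))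
        ((-(κ' / κ t)) • sphereLog (sphereExp x₁ (κ t • sphereLog x₁ x₀)) x₁) t
    ∧ ‖(-(κ' / κ t)) • sphereLog (sphereExp x₁ (κ t • sphereLog x₁ x₀)) x₁‖
        = |κ'| * Real.arccos ⟪x₀, x₁⟫ := by
  set u := sphereLog x₁ x₀
  have hu : ⟪x₁, u⟫ = 0 := inner_sphereLog h₁ x₀
  have hκu : ⟪x₁, κ t • u⟫ = 0 := by rw [inner_smul_right, hu, mul_zero]
  have hlen : ‖κ t • u‖ = |κ t| * Real.arccos ⟪x₀, x₁⟫ := by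
    rw [norm_smul, norm_sphereLog h₁ h₀ (real_inner_comm x₀ x₁ ▸ hc), real_inner_comm,
      Real.norm_eq_abs]
  have hangle : ‖κ t • u‖ ∈ Set.Ioo 0 Real.pi :=
    hlen ▸ ⟨mul_pos (abs_pos.2 hκ0) (Real.arccos_pos.2 hc.2), hπ⟩
  have hunit : ‖sphereExp x₁ (κ t • u)‖ = 1 := norm_sphereExp h₁ hκu
  have hcos : ⟪sphereExp x₁ (κ t • u), x₁⟫ = Real.cos ‖κ t • u‖ := inner_sphereExp_self h₁ hκu
  have hmem : ⟪sphereExp x₁ (κ t • u), x₁⟫ ∈ Set.Ioo (-1) 1 :=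
    hcos ▸ cos_mem_Ioo_of_mem_Ioo hangle
  refine ⟨hunit, hmem, hasDerivAt_sphereExp_smul_eq_sphereLog hκ hκ0 h₁ hu hangle.2, ?_⟩
  rw [norm_smul, norm_sphereLog hunit h₁ hmem, hcos, Real.arccos_cos hangle.1.le hangle.2.le,
    hlen, norm_neg, norm_div, Real.norm_eq_abs, Real.norm_eq_abs, ← mul_assoc,
    div_mul_cancel₀ _ (abs_ne_zero.2 hκ0)]

end Sphere

/-- Geodesic interpolation (conditional flow of Riemannian flow matching
on the sphere). For unit vectors `x₀, x₁` with `⟨x₀,x₁⟩ ∈ (−1,1)` and a differentiable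
scheduler `κ : ℝ → (0,1]`, the curve `x_t := exp_{x₁}(κ t • log_{x₁} x₀)` satisfies,
at every `t` with `κ t < 1`: `x_t` is a unit vector with `⟨x_t, x₁⟩ ∈ (−1,1)`, the
curve is differentiable at `t` with velocity `−(κ' t/κ t) • log_{x_t}(x₁)`, and the
speed is `|κ' t| · arccos⟨x₀,x₁⟩`. -/
theorem sphere_geodesic_interpolation_velocity {n : ℕ}
    (x₀ x₁ : EuclideanSpace ℝ (Fin (n + 1)))
    (h₀ : ‖x₀‖ = 1) (h₁ : ‖x₁‖ = 1) (hc : ⟪x₀, x₁⟫ ∈ Set.Ioo (-1 : ℝ) 1)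
    (κ κ' : ℝ → ℝ)
    (hκ : ∀ t, HasDerivAt κ (κ' t) t)
    (hκr : ∀ t, κ t ∈ Set.Ioc (0 : ℝ) 1) :
    ∀ t : ℝ, κ t < 1 →
      ‖sphereExp x₁ (κ t • sphereLog x₁ x₀)‖ = 1
      ∧ ⟪sphereExp x₁ (κ t • sphereLog x₁ x₀), x₁⟫ ∈ Set.Ioo (-1 : ℝ) 1
      ∧ HasDerivAt (fun s => sphereExp x₁ (κ s • sphereLog x₁ x₀))
          ((-(κ' t / κ t)) • sphereLog (sphereExp x₁ (κ t • sphereLog x₁ x₀)) x₁) t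
      ∧ ‖(-(κ' t / κ t)) • sphereLog (sphereExp x₁ (κ t • sphereLog x₁ x₀)) x₁‖
          = |κ' t| * Real.arccos ⟪x₀, x₁⟫ := by
  intro t ht
  refine sphere_geodesic_interpolation_velocity_general x₀ x₁ h₀ h₁ hc (hκ t) (hκr t).1.ne' ?_
  rw [abs_of_pos (hκr t).1]
  exact (mul_lt_of_lt_one_left (Real.arccos_pos.2 hc.2) ht).trans_le (Real.arccos_le_pi _)
end

section
/- For every u ∈ ℝ³ with r := ‖u‖ satisfying r > 0 and sin(r) ≠ 0, the left Jacobian is invertible with the closed-form inverse J_L(u)⁻¹ = I − (1/2)·û + (1/r² − (1 + cos(r))/(2r·sin(r)))·û²; that is, J_L(u) · (I − (1/2)·û + (1/r² − (1 + cos(r))/(2r·sin(r)))·û²) = I. -/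
open Matrix

/-- The hat matrix of `u ∈ ℝ³`: the skew-symmetric matrix with `hat u *ᵥ v = u ×₃ v`. -/
def hat (u : Fin 3 → ℝ) : Matrix (Fin 3) (Fin 3) ℝ :=
  !![0, -u 2, u 1; u 2, 0, -u 0; -u 1, u 0, 0]

/-- The left Jacobian of SO(3): `J_L(u) = Σ_{n≥0} ûⁿ/(n+1)!`. -/
noncomputable def JL (u : Fin 3 → ℝ) : Matrix (Fin 3) (Fin 3) ℝ :=
  ∑' k : ℕ, ((Nat.factorial (k + 1) : ℝ))⁻¹ • hat u ^ k

/-!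
The characteristic equation of `û` is `û³ = -r² û`. For any element `a` of a real topological
algebra with `a³ = -r² a`, it collapses the series to a quadratic polynomial in `a`, whose
coefficients are tails of the cosine and sine series. Such polynomials commute and multiply by an
explicit rule, so invertibility reduces to two scalar equations. With the inverse written in terms
of `cot (r / 2)`, these follow from `(1 - cos r) cot (r / 2) = sin r` and
`sin r cot (r / 2) = 1 + cos r`, valid as soon as `sin (r / 2) ≠ 0`.
-/

open Real
open scoped Nat

section HalfAngle

variable {x : ℝ}

lemma sin_half_ne_zero (hx : sin x ≠ 0) : sin (x / 2) ≠ 0 := by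
  intro h
  apply hx
  rw [← mul_div_cancel₀ x (two_ne_zero' ℝ), sin_two_mul, h, mul_zero, zero_mul]

lemma one_sub_cos_mul_cot_half (hx : sin (x / 2) ≠ 0) : (1 - cos x) * cot (x / 2) = sin x := by
  obtain ⟨y, rfl⟩ : ∃ y, x = 2 * y := ⟨x / 2, by ring⟩
  rw [mul_div_cancel_left₀ y two_ne_zero] at hx ⊢
  rw [cot_eq_cos_div_sin, cos_two_mul, sin_two_mul, cos_sq']
  field_simp
  ring

lemma sin_mul_cot_half (hx : sin (x / 2) ≠ 0) : sin x * cot (x / 2) = 1 + cos x := by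
  obtain ⟨y, rfl⟩ : ∃ y, x = 2 * y := ⟨x / 2, by ring⟩
  rw [mul_div_cancel_left₀ y two_ne_zero] at hx ⊢
  rw [cot_eq_cos_div_sin, cos_two_mul, sin_two_mul]
  field_simp
  ring

lemma cot_half (hx : sin x ≠ 0) : cot (x / 2) = (1 + cos x) / sin x := by
  rw [eq_div_iff hx, mul_comm, sin_mul_cot_half (sin_half_ne_zero hx)]

end HalfAngle

section ScalarSeries

variable {r : ℝ}

lemma hasSum_one_sub_cos_div_sq (hr : r ≠ 0) :
    HasSum (fun k : ℕ ↦ (-r ^ 2) ^ k / (2 * k + 2)!) ((1 - cos r) / r ^ 2) := by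
  have h := ((hasSum_nat_add_iff' 1).2 (hasSum_cos r)).div_const (-r ^ 2)
  convert! h using 1
  · funext k
    rw [neg_pow, ← pow_mul, mul_add_one]
    field_simp
    ring
  · simp only [Finset.sum_range_one, mul_zero, pow_zero, one_mul, Nat.factorial_zero,
      Nat.cast_one, div_one]
    field_simp
    ring

lemma hasSum_sub_sin_div_pow_three (hr : r ≠ 0) :
    HasSum (fun k : ℕ ↦ (-r ^ 2) ^ k / (2 * k + 3)!) ((r - sin r) / r ^ 3) := by
  have h := ((hasSum_nat_add_iff' 1).2 (hasSum_sin r)).div_const (-r ^ 3)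
  convert! h using 1
  · funext k
    rw [neg_pow, ← pow_mul, mul_add_one]
    field_simp
    ring
  · simp only [Finset.sum_range_one, mul_zero, zero_add, pow_zero, pow_one, one_mul,
      Nat.factorial_one, Nat.cast_one, div_one]
    field_simp
    ring

end ScalarSeries

section CubicRelation

variable {R A : Type*} [CommSemiring R] [Semiring A] [Algebra R A] {a : A} {t : R}

lemma pow_two_mul_add_one_of_pow_three_eq_smul (ha : a ^ 3 = t • a) (k : ℕ) :
    a ^ (2 * k + 1) = t ^ k • a := by
  induction k with
  | zero => simp
  | succ k ih =>
    calc a ^ (2 * (k + 1) + 1) = a ^ (2 * k + 1) * a ^ 2 := by rw [← pow_add]; rfl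
      _ = t ^ k • a ^ 3 := by rw [ih, smul_mul_assoc, ← pow_succ']
      _ = t ^ (k + 1) • a := by rw [ha, smul_smul, pow_succ]

lemma pow_two_mul_add_two_of_pow_three_eq_smul (ha : a ^ 3 = t • a) (k : ℕ) :
    a ^ (2 * k + 2) = t ^ k • a ^ 2 := by
  rw [pow_succ, pow_two_mul_add_one_of_pow_three_eq_smul ha, smul_mul_assoc, ← sq]

lemma quadratic_mul_quadratic_of_pow_three_eq_smul (ha : a ^ 3 = t • a) (x y z w : R) :
    (1 + x • a + y • a ^ 2) * (1 + z • a + w • a ^ 2) =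
      1 + (x + z + t * (x * w + y * z)) • a + (y + w + x * z + t * (y * w)) • a ^ 2 := by
  have h₂₁ : a ^ 2 * a = t • a := by rw [← pow_succ, ha]
  have h₁₂ : a * a ^ 2 = t • a := by rw [← pow_succ', ha]
  have h₂₂ : a ^ 2 * a ^ 2 = t • a ^ 2 := by
    simpa [← pow_add] using pow_two_mul_add_two_of_pow_three_eq_smul ha 1
  simp only [mul_add, add_mul, smul_mul_assoc, mul_smul_comm, one_mul, mul_one, ← sq a,
    h₂₁, h₁₂, h₂₂]
  module

lemma quadratic_mul_quadratic_eq_one_of_pow_three_eq_smul (ha : a ^ 3 = t • a) {x y z w : R}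
    (h₁ : x + z + t * (x * w + y * z) = 0) (h₂ : y + w + x * z + t * (y * w) = 0) :
    (1 + x • a + y • a ^ 2) * (1 + z • a + w • a ^ 2) = 1 := by
  simp [quadratic_mul_quadratic_of_pow_three_eq_smul ha, h₁, h₂]

lemma isUnit_quadratic_of_pow_three_eq_smul (ha : a ^ 3 = t • a) {x y z w : R}
    (h₁ : x + z + t * (x * w + y * z) = 0) (h₂ : y + w + x * z + t * (y * w) = 0) :
    IsUnit (1 + x • a + y • a ^ 2) :=
  isUnit_iff_exists.2 ⟨1 + z • a + w • a ^ 2,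
    quadratic_mul_quadratic_eq_one_of_pow_three_eq_smul ha h₁ h₂,
    quadratic_mul_quadratic_eq_one_of_pow_three_eq_smul ha (by rw [← h₁]; ring)
      (by rw [← h₂]; ring)⟩

end CubicRelation

section LeftJacobian

variable {A : Type*} [Ring A] [Algebra ℝ A] [TopologicalSpace A]

/-- The left Jacobian of an element of a real topological algebra: the value at `a` of the entire
function `(exp z - 1) / z`, so that `JL u` is the left Jacobian of `hat u`. As a `tsum`, it is `0`
when the series does not converge. -/
noncomputable def leftJacobian (a : A) : A :=
  ∑' k : ℕ, ((k + 1)! : ℝ)⁻¹ • a ^ k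

variable [ContinuousAdd A] [ContinuousSMul ℝ A] {a : A} {r : ℝ}

lemma hasSum_leftJacobian_of_pow_three_eq_smul (ha : a ^ 3 = (-r ^ 2) • a) (hr : r ≠ 0) :
    HasSum (fun k : ℕ ↦ ((k + 1)! : ℝ)⁻¹ • a ^ k)
      (1 + ((1 - cos r) / r ^ 2) • a + ((r - sin r) / r ^ 3) • a ^ 2) := by
  have hodd : HasSum (fun k : ℕ ↦ ((2 * k + 2)! : ℝ)⁻¹ • a ^ (2 * k + 1))
      (((1 - cos r) / r ^ 2) • a) := by
    simpa only [pow_two_mul_add_one_of_pow_three_eq_smul ha, smul_smul, ← div_eq_inv_mul]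
      using (hasSum_one_sub_cos_div_sq hr).smul_const a
  have heven : HasSum (fun k : ℕ ↦ ((2 * k + 3)! : ℝ)⁻¹ • a ^ (2 * k + 2))
      (((r - sin r) / r ^ 3) • a ^ 2) := by
    simpa only [pow_two_mul_add_two_of_pow_three_eq_smul ha, smul_smul, ← div_eq_inv_mul]
      using (hasSum_sub_sin_div_pow_three hr).smul_const (a ^ 2)
  have htail : HasSum (fun k : ℕ ↦ ((k + 2)! : ℝ)⁻¹ • a ^ (k + 1))
      (((1 - cos r) / r ^ 2) • a + ((r - sin r) / r ^ 3) • a ^ 2) :=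
    HasSum.even_add_odd (f := fun k : ℕ ↦ ((k + 2)! : ℝ)⁻¹ • a ^ (k + 1)) hodd heven
  simpa [add_assoc] using HasSum.zero_add (f := fun k : ℕ ↦ ((k + 1)! : ℝ)⁻¹ • a ^ k) htail

variable [T2Space A]

lemma leftJacobian_of_pow_three_eq_smul (ha : a ^ 3 = (-r ^ 2) • a) (hr : r ≠ 0) :
    leftJacobian a = 1 + ((1 - cos r) / r ^ 2) • a + ((r - sin r) / r ^ 3) • a ^ 2 :=
  (hasSum_leftJacobian_of_pow_three_eq_smul ha hr).tsum_eq

theorem so3_left_jacobian_inverse_general (ha : a ^ 3 = (-r ^ 2) • a) (hr : r ≠ 0)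
    (hs : sin (r / 2) ≠ 0) :
    IsUnit (leftJacobian a) ∧
      leftJacobian a * (1 - (1 / 2 : ℝ) • a + (1 / r ^ 2 - cot (r / 2) / (2 * r)) • a ^ 2) = 1 := by
  have hsin := one_sub_cos_mul_cot_half hs
  have hcos := sin_mul_cot_half hs
  have coeff_one : (1 - cos r) / r ^ 2 + -(1 / 2) + -r ^ 2 * ((1 - cos r) / r ^ 2 *
      (1 / r ^ 2 - cot (r / 2) / (2 * r)) + (r - sin r) / r ^ 3 * -(1 / 2)) = 0 := by
    field_simp
    linear_combination r * hsin
  have coeff_sq : (r - sin r) / r ^ 3 + (1 / r ^ 2 - cot (r / 2) / (2 * r)) +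
      (1 - cos r) / r ^ 2 * -(1 / 2) + -r ^ 2 * ((r - sin r) / r ^ 3 *
      (1 / r ^ 2 - cot (r / 2) / (2 * r))) = 0 := by
    field_simp
    linear_combination -r * hcos
  rw [leftJacobian_of_pow_three_eq_smul ha hr, sub_eq_add_neg 1 ((1 / 2 : ℝ) • a), ← neg_smul]
  exact ⟨isUnit_quadratic_of_pow_three_eq_smul ha coeff_one coeff_sq,
    quadratic_mul_quadratic_eq_one_of_pow_three_eq_smul ha coeff_one coeff_sq⟩

end LeftJacobian

lemma hat_pow_three (u : Fin 3 → ℝ) :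
    hat u ^ 3 = (-(u 0 ^ 2 + u 1 ^ 2 + u 2 ^ 2)) • hat u := by
  rw [pow_succ, sq]
  ext i j
  fin_cases i <;> fin_cases j <;> simp [hat, Matrix.mul_apply, Fin.sum_univ_three] <;> ring

/-- For `u ∈ ℝ³` with Euclidean norm `r > 0` and `sin r ≠ 0`, the left
Jacobian is invertible with closed-form inverse
`J_L(u)⁻¹ = I − (1/2)·û + (1/r² − (1 + cos r)/(2r·sin r))·û²`; that is,
`J_L(u) · (I − (1/2)·û + (1/r² − (1 + cos r)/(2r·sin r))·û²) = I`. -/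
theorem so3_left_jacobian_inverse (u : Fin 3 → ℝ) (r : ℝ)
    (hr : r = Real.sqrt (u 0 ^ 2 + u 1 ^ 2 + u 2 ^ 2))
    (hr0 : 0 < r) (hs : Real.sin r ≠ 0) :
    IsUnit (JL u)
    ∧ JL u * (1 - (1 / 2 : ℝ) • hat u
        + (1 / r ^ 2 - (1 + Real.cos r) / (2 * r * Real.sin r)) • hat u ^ 2) = 1 := by
  have hcube : hat u ^ 3 = (-r ^ 2) • hat u := by
    rw [hat_pow_three, hr, sq_sqrt (by positivity)]
  have hcoeff : (1 + cos r) / (2 * r * sin r) = cot (r / 2) / (2 * r) := by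
    rw [cot_half hs, div_div, mul_comm (sin r)]
  rw [hcoeff]
  exact so3_left_jacobian_inverse_general hcube hr0.ne' (sin_half_ne_zero hs)
end
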